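/- Let X ⊆ P² be a k-configuration of type (1,2,…,s) with s ≥ 2, and suppose there are exactly s lines in P² containing exactly s points of X. Then for every integer m ≥ 2, ΔH_{mX}(m·s − 1) = s. -/

import Mathlib

/-- The projective plane over a field `K`, as the projectivization of `K³`. -/
abbrev P2 (K : Type) [Field K] := Projectivization K (Fin 3 → K)

/-- A line in `P2 K`: a 2-dimensional linear subspace of `K³`. -/
structure ProjLine (K : Type) [Field K] where
  toSubmodule : Submodule K (Fin 3 → K)
  finrank_eq_two : Module.finrank K toSubmodule = 2

/-- The set of points of `P2 K` lying on a line. -/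
def ProjLine.points {K : Type} [Field K] (L : ProjLine K) : Set (P2 K) :=
  {p | p.submodule ≤ L.toSubmodule}

/-- The homogeneous prime ideal of a point of `P2 K`: the ideal generated by
the linear forms vanishing at the point. -/
noncomputable def pointIdeal {K : Type} [Field K] (p : P2 K) :
    Ideal (MvPolynomial (Fin 3) K) :=
  Ideal.span {f | f.IsHomogeneous 1 ∧ MvPolynomial.eval p.rep f = 0}

/-- The defining ideal `I_{mX} = ⋂_{P ∈ X} I_P^m` of the fat point scheme `mX`. -/
noncomputable def fatIdeal {K : Type} [Field K] (X : Set (P2 K)) (m : ℕ) :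
    Ideal (MvPolynomial (Fin 3) K) :=
  ⨅ p ∈ X, (pointIdeal p) ^ m

/-- The Hilbert function of `R/I`: `H(t) = dim_K R_t - dim_K I_t`. -/
noncomputable def hilb {K : Type} [Field K] (I : Ideal (MvPolynomial (Fin 3) K)) (t : ℕ) : ℕ :=
  Module.finrank K ↥(MvPolynomial.homogeneousSubmodule (Fin 3) K t) -
    Module.finrank K ↥(Submodule.restrictScalars K (I : Submodule (MvPolynomial (Fin 3) K) (MvPolynomial (Fin 3) K)) ⊓ MvPolynomial.homogeneousSubmodule (Fin 3) K t)

/-- The Hilbert function extended to `ℤ`, with `H(t) = 0` for `t < 0`. -/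
noncomputable def hilbZ {K : Type} [Field K] (I : Ideal (MvPolynomial (Fin 3) K)) (t : ℤ) : ℤ :=
  if t < 0 then 0 else hilb I t.toNat

/-- The first difference `ΔH(t) = H(t) - H(t-1)` of the Hilbert function. -/
noncomputable def deltaHilb {K : Type} [Field K] (I : Ideal (MvPolynomial (Fin 3) K)) (t : ℤ) : ℤ :=
  hilbZ I t - hilbZ I (t - 1)

/-- `X` is a k-configuration of type `(d 0, …, d (s-1))` defined using the subsets
`Xs 0, …, Xs (s-1)` and the (distinct) lines `Ls 0, …, Ls (s-1)`. -/
structure IsKConfig {K : Type} [Field K] {s : ℕ} (X : Set (P2 K)) (d : Fin s → ℕ)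
    (Xs : Fin s → Set (P2 K)) (Ls : Fin s → ProjLine K) : Prop where
  one_le : ∀ i, 1 ≤ d i
  strictMono : StrictMono d
  lines_distinct : Function.Injective Ls
  union_eq : X = ⋃ i, Xs i
  card_eq : ∀ i, (Xs i).ncard = d i
  subset_line : ∀ i, Xs i ⊆ (Ls i).points
  not_mem : ∀ i j : Fin s, j < i → ∀ p ∈ Xs j, p ∉ (Ls i).points

/-!
A form of degree `t` whose prescribed multiplicities along a line add up to more than `t` vanishes
on that line (Bezout); dividing by the equation of the line leaves a form of degree `t - 1` with
the multiplicities on the line lowered by one. If instead they add up to at most `t + 1`, then the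
conditions are independent as soon as those left after the division are.

Let `Ω` be the set of the `s` lines with `s` points of `X` and let `r P` be the number of lines of
`Ω` through `P`. Counting the pairs of lines meeting in a point of `X` and using
`(r P - 1) * (r P - 2) ≥ 0`, the bound `s * (s + 1) / 2` on the number of points forces `r = 1` or
`r = 2` on `X` and any two lines of `Ω` to meet in `X`. In degrees `m * s - 1` and `m * s - 2`
every line of `Ω` is therefore a fixed component, and removing them leaves the multiplicities
`m - r` in degree `s` less. These impose independent conditions: splitting off `Ω` repeatedly
leads to the `s` points with `r = 1`, counted once, in a degree at least `s - 2`, where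
independence holds because these points are not collinear. Hence `ΔH` at `m * s - 1` is
`m * s - (m - 1) * s = s`.
-/

section LinearSubstitution

open MvPolynomial

variable {K n m l : Type*} [CommRing K] [Fintype n] [DecidableEq n]

/-- Pull-back of polynomial functions along a linear map `f`: the `i`-th variable is replaced by
the linear form computing the `i`-th coordinate of `f`. -/
noncomputable def linearSubst (f : (n → K) →ₗ[K] (m → K)) :
    MvPolynomial m K →ₐ[K] MvPolynomial n K :=
  bind₁ (LinearMap.toMatrix' f).toMvPolynomial

lemma linearSubst_X (f : (n → K) →ₗ[K] (m → K)) (i : m) :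
    linearSubst f (X i) = (LinearMap.toMatrix' f).toMvPolynomial i :=
  bind₁_X_right _ _

lemma eval_linearSubst (f : (n → K) →ₗ[K] (m → K)) (v : n → K) (F : MvPolynomial m K) :
    eval v (linearSubst f F) = eval (f v) F := by
  rw [linearSubst, eval, eval₂Hom_bind₁]
  congr 2
  ext i
  exact (Matrix.toMvPolynomial_eval_eq_apply _ i v).trans
    (congrFun (LinearMap.toMatrix'_mulVec f v) i)

lemma isHomogeneous_linearSubst (f : (n → K) →ₗ[K] (m → K)) {F : MvPolynomial m K} {d : ℕ}
    (hF : F.IsHomogeneous d) : (linearSubst f F).IsHomogeneous d :=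
  one_mul d ▸ hF.aeval (n := 1) _ (LinearMap.toMatrix' f).toMvPolynomial_isHomogeneous

variable [Fintype m] [DecidableEq m]

lemma linearSubst_comp (f : (n → K) →ₗ[K] (m → K)) (g : (m → K) →ₗ[K] (l → K)) :
    (linearSubst f).comp (linearSubst g) = linearSubst (f := g ∘ₗ f) := by
  refine algHom_ext fun i => ?_
  rw [AlgHom.comp_apply, linearSubst_X, linearSubst_X, LinearMap.toMatrix'_comp,
    Matrix.toMvPolynomial_mul, linearSubst]

lemma linearSubst_id : linearSubst (LinearMap.id : (n → K) →ₗ[K] (n → K)) = AlgHom.id K _ := by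
  refine algHom_ext fun i => ?_
  rw [linearSubst_X, LinearMap.toMatrix'_id, Matrix.toMvPolynomial_one, AlgHom.id_apply]

lemma linearSubst_linearSubst_symm (e : (n → K) ≃ₗ[K] (m → K)) (F : MvPolynomial n K) :
    linearSubst (e : (n → K) →ₗ[K] (m → K)) (linearSubst (e.symm : (m → K) →ₗ[K] (n → K)) F) =
      F := by
  rw [← AlgHom.comp_apply, linearSubst_comp, LinearEquiv.symm_comp, linearSubst_id,
    AlgHom.id_apply]

end LinearSubstitution

lemma linearSubst_injective {K n m : Type*} [CommRing K] [Fintype n] [DecidableEq n] [Finite m]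
    (e : (n → K) ≃ₗ[K] (m → K)) :
    Function.Injective (linearSubst (e : (n → K) →ₗ[K] (m → K))) := by
  classical
  have := Fintype.ofFinite m
  exact Function.LeftInverse.injective (g := linearSubst (e.symm : (m → K) →ₗ[K] (n → K)))
    (linearSubst_linearSubst_symm e.symm)

section Frames

open MvPolynomial

variable {K : Type*} [Field K] {n : ℕ}

lemma exists_linearEquiv_cons {V : Type*} [AddCommGroup V] [Module K V] [FiniteDimensional K V]
    {y : V} (hy : y ≠ 0) {N : Submodule K V} (hN : IsCompl (K ∙ y) N)
    (hrank : Module.finrank K N = n) :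
    ∃ e : V ≃ₗ[K] (Fin (n + 1) → K), e y = Pi.single 0 1 ∧ ∀ x, x ∈ N ↔ e x 0 = 0 := by
  let eN : N ≃ₗ[K] (Fin n → K) :=
    LinearEquiv.ofFinrankEq _ _ (by rw [hrank, Module.finrank_fin_fun])
  let e := (Submodule.prodEquivOfIsCompl _ _ hN).symm ≪≫ₗ
    ((LinearEquiv.toSpanNonzeroSingleton K V y hy).symm.prodCongr eN) ≪≫ₗ
      Fin.consLinearEquiv K fun _ => K
  refine ⟨e, ?_, fun x => ?_⟩
  · have hspan : y ∈ K ∙ y := Submodule.mem_span_singleton_self y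
    have hproj := Submodule.prodEquivOfIsCompl_symm_apply_left _ _ hN ⟨y, hspan⟩
    have hone : (LinearEquiv.toSpanNonzeroSingleton K V y hy).symm ⟨y, hspan⟩ = 1 :=
      LinearEquiv.coord_self K V y hy
    ext i
    refine Fin.cases ?_ (fun j => ?_) i <;>
      simp [e, hproj, hone, Fin.consLinearEquiv, Fin.consEquiv]
  · rw [← Submodule.prodEquivOfIsCompl_symm_apply_fst_eq_zero _ _ hN]
    exact (LinearEquiv.map_eq_zero_iff (LinearEquiv.toSpanNonzeroSingleton K V y hy).symm).symm

variable (K n) in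
/-- The inclusion of the coordinate hyperplane `x₀ = 0`. -/
def consZero : (Fin n → K) →ₗ[K] (Fin (n + 1) → K) :=
  (Fin.consLinearEquiv K fun _ : Fin (n + 1) => K).toLinearMap ∘ₗ LinearMap.inr K K (Fin n → K)

lemma consZero_apply (a : Fin n → K) : consZero K n a = Fin.cons 0 a := rfl

lemma linearSubst_consZero_X_zero : linearSubst (consZero K n) (X 0) = 0 := by
  rw [linearSubst_X, Matrix.toMvPolynomial]
  refine Finset.sum_eq_zero fun j _ => ?_
  rw [LinearMap.toMatrix'_apply, consZero_apply, Fin.cons_zero, monomial_zero]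

lemma linearSubst_consZero_X_succ (i : Fin n) : linearSubst (consZero K n) (X i.succ) = X i := by
  rw [linearSubst_X, ← congrFun (Matrix.toMvPolynomial_one (R := K)) i]
  refine Finset.sum_congr rfl fun j _ => ?_
  rw [LinearMap.toMatrix'_apply, consZero_apply, Fin.cons_succ, Matrix.one_apply, Pi.single_apply]

lemma X_zero_dvd_of_linearSubst_consZero_eq_zero {F : MvPolynomial (Fin (n + 1)) K}
    (hF : linearSubst (consZero K n) F = 0) : X 0 ∣ F := by
  let q := Ideal.Quotient.mkₐ K (Ideal.span {(X 0 : MvPolynomial (Fin (n + 1)) K)})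
  have hq : (q.comp (rename Fin.succ)).comp (linearSubst (consZero K n)) = q := by
    refine algHom_ext fun i => ?_
    rw [AlgHom.comp_apply, AlgHom.comp_apply]
    refine Fin.cases ?_ (fun j => ?_) i
    · rw [linearSubst_consZero_X_zero, map_zero, map_zero]
      exact (Ideal.Quotient.eq_zero_iff_mem.2 (Ideal.mem_span_singleton_self _)).symm
    · rw [linearSubst_consZero_X_succ, rename_X]
  have hqF : q F = 0 := by
    rw [← hq, AlgHom.comp_apply, hF, map_zero]
  exact Ideal.mem_span_singleton.1 (Ideal.Quotient.eq_zero_iff_mem.1 hqF)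

end Frames

section AxisOrder

open MvPolynomial

variable (K : Type*) [Field K] (n : ℕ)

/-- The ideal of the first coordinate axis of affine `(n + 1)`-space, that is, the homogeneous
ideal of the projective point `[1 : 0 : ⋯ : 0]`. -/
noncomputable def axisIdeal : Ideal (MvPolynomial (Fin (n + 1)) K) :=
  Ideal.span (X '' Set.range Fin.succ)

variable {K n}

/-- The order of vanishing of a polynomial along the first coordinate axis: the least total degree
in the remaining variables of a monomial of `F`. -/
noncomputable def axisOrder (F : MvPolynomial (Fin (n + 1)) K) : ℕ∞ :=
  MvPowerSeries.weightedOrder (Fin.cons 0 1) (F : MvPowerSeries (Fin (n + 1)) K)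

lemma axisOrder_mul (F G : MvPolynomial (Fin (n + 1)) K) :
    axisOrder (F * G) = axisOrder F + axisOrder G := by
  rw [axisOrder, coe_mul, MvPowerSeries.weightedOrder_mul, axisOrder, axisOrder]

lemma weight_cons_zero_one (d : Fin (n + 1) →₀ ℕ) :
    Finsupp.weight (Fin.cons 0 1 : Fin (n + 1) → ℕ) d = ∑ i : Fin n, d i.succ := by
  simp [Finsupp.weight_apply, Finsupp.sum_fintype, Fin.sum_univ_succ]

lemma natCast_le_axisOrder_iff {F : MvPolynomial (Fin (n + 1)) K} {m : ℕ} :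
    (m : ℕ∞) ≤ axisOrder F ↔ ∀ d, ∑ i : Fin n, d i.succ < m → coeff d F = 0 := by
  simp_rw [← weight_cons_zero_one, ← coeff_coe F]
  exact ⟨fun h d hd => MvPowerSeries.coeff_eq_zero_of_lt_weightedOrder _
    ((Nat.cast_lt.2 hd).trans_le h), MvPowerSeries.nat_le_weightedOrder _⟩

lemma one_le_axisOrder_of_mem_axisIdeal {F : MvPolynomial (Fin (n + 1)) K}
    (hF : F ∈ axisIdeal K n) : 1 ≤ axisOrder F := by
  refine natCast_le_axisOrder_iff.2 fun d hd => ?_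
  by_contra hcoeff
  obtain ⟨_, ⟨i, rfl⟩, hi⟩ := mem_ideal_span_X_image.1 hF d (mem_support_iff.2 hcoeff)
  exact hi (Finset.sum_eq_zero_iff.1 (Nat.lt_one_iff.1 hd) i (Finset.mem_univ i))

lemma le_axisOrder_of_mem_axisIdeal_pow {F : MvPolynomial (Fin (n + 1)) K} {m : ℕ}
    (hF : F ∈ axisIdeal K n ^ m) : m ≤ axisOrder F := by
  induction m generalizing F with
  | zero => exact bot_le
  | succ m ih =>
    rw [pow_succ] at hF
    refine Submodule.mul_induction_on hF (fun G hG H hH => ?_) fun G H hG hH => ?_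
    · rw [axisOrder_mul, Nat.cast_succ]
      exact add_le_add (ih hG) (one_le_axisOrder_of_mem_axisIdeal hH)
    · rw [natCast_le_axisOrder_iff] at *
      exact fun d hd => by rw [coeff_add, hG d hd, hH d hd, add_zero]

lemma monomial_mem_axisIdeal_pow {d : Fin (n + 1) →₀ ℕ} {m : ℕ} (c : K)
    (hd : m ≤ ∑ i : Fin n, d i.succ) : monomial d c ∈ axisIdeal K n ^ m := by
  rw [monomial_eq, Finsupp.prod_fintype _ _ fun _ => pow_zero _, Fin.prod_univ_succ]
  refine Ideal.mul_mem_left _ _ (Ideal.mul_mem_left _ _ (Ideal.pow_le_pow_right hd ?_))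
  rw [← Finset.prod_pow_eq_pow_sum]
  exact Ideal.prod_mem_prod fun i _ =>
    Ideal.pow_mem_pow (Ideal.subset_span (Set.mem_image_of_mem X (Set.mem_range_self i))) _

lemma mem_axisIdeal_pow_iff {F : MvPolynomial (Fin (n + 1)) K} {m : ℕ} :
    F ∈ axisIdeal K n ^ m ↔ m ≤ axisOrder F := by
  refine ⟨le_axisOrder_of_mem_axisIdeal_pow, fun hF => ?_⟩
  rw [natCast_le_axisOrder_iff] at hF
  rw [F.as_sum]
  exact Ideal.sum_mem _ fun d hd => monomial_mem_axisIdeal_pow _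
    (not_lt.1 fun hlt => mem_support_iff.1 hd (hF d hlt))

lemma axisOrder_le_of_isHomogeneous {F : MvPolynomial (Fin (n + 1)) K} {k : ℕ}
    (hF : F.IsHomogeneous k) (hF0 : F ≠ 0) : axisOrder F ≤ k := by
  obtain ⟨d, hd⟩ := ne_zero_iff.1 hF0
  have hdeg : ∑ i, d i = k := by
    rw [← Finsupp.degree_eq_sum]
    exact not_imp_comm.1 hF.coeff_eq_zero hd
  refine (MvPowerSeries.weightedOrder_le _ (by rwa [coeff_coe])).trans (Nat.cast_le.2 ?_)
  rw [weight_cons_zero_one, ← hdeg, Fin.sum_univ_succ]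
  exact Nat.le_add_left _ _

lemma mem_axisIdeal_of_isHomogeneous_one {F : MvPolynomial (Fin (n + 1)) K}
    (hF : F.IsHomogeneous 1) (hF0 : eval (Pi.single 0 1) F = 0) : F ∈ axisIdeal K n := by
  rw [← mem_homogeneousSubmodule, homogeneousSubmodule_one_eq_span_X,
    Submodule.mem_span_range_iff_exists_fun] at hF
  obtain ⟨c, rfl⟩ := hF
  have hc : c 0 = 0 := by
    simpa [map_sum, smul_eval, Pi.single_apply] using hF0
  rw [Fin.sum_univ_succ, hc, zero_smul, zero_add]
  exact Ideal.sum_mem _ fun i _ => Submodule.smul_of_tower_mem _ _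
    (Ideal.subset_span (Set.mem_image_of_mem X (Set.mem_range_self i)))

end AxisOrder

section Multiplicity

open MvPolynomial

variable {K : Type} [Field K] (p : P2 K)

lemma exists_pointFrame :
    ∃ e : (Fin 3 → K) ≃ₗ[K] (Fin 3 → K), e p.rep = Pi.single 0 1 := by
  obtain ⟨N, hN⟩ := Submodule.exists_isCompl (K ∙ p.rep)
  have hrank : Module.finrank K N = 2 := by
    have := Submodule.finrank_add_eq_of_isCompl hN
    rw [finrank_span_singleton p.rep_nonzero, Module.finrank_fin_fun] at this
    omega
  obtain ⟨e, he, -⟩ := exists_linearEquiv_cons p.rep_nonzero hN hrank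
  exact ⟨e, he⟩

/-- Linear coordinates on `K³` in which the point `p` becomes `[1 : 0 : 0]`. -/
noncomputable def pointFrame : (Fin 3 → K) ≃ₗ[K] (Fin 3 → K) :=
  (exists_pointFrame p).choose

lemma pointFrame_rep : pointFrame p p.rep = Pi.single 0 1 :=
  (exists_pointFrame p).choose_spec

lemma pointFrame_symm_single : (pointFrame p).symm (Pi.single 0 1) = p.rep :=
  (pointFrame p).symm_apply_eq.2 (pointFrame_rep p).symm

/-- The multiplicity at the point `p` of the plane curve `F = 0`. -/
noncomputable def multAt (F : MvPolynomial (Fin 3) K) : ℕ∞ :=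
  axisOrder (linearSubst (pointFrame p).symm.toLinearMap F)

lemma map_pointIdeal_le :
    (pointIdeal p).map (linearSubst (pointFrame p).symm.toLinearMap) ≤ axisIdeal K 2 := by
  rw [pointIdeal, Ideal.map_span, Ideal.span_le]
  rintro _ ⟨f, ⟨hf, hf0⟩, rfl⟩
  refine mem_axisIdeal_of_isHomogeneous_one (isHomogeneous_linearSubst _ hf) ?_
  rwa [eval_linearSubst, LinearEquiv.coe_coe, pointFrame_symm_single]

lemma map_axisIdeal_le :
    (axisIdeal K 2).map (linearSubst (pointFrame p).toLinearMap) ≤ pointIdeal p := by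
  rw [axisIdeal, Ideal.map_span, Ideal.span_le]
  rintro _ ⟨_, ⟨_, ⟨i, rfl⟩, rfl⟩, rfl⟩
  refine Ideal.subset_span ⟨isHomogeneous_linearSubst _ (isHomogeneous_X _ _), ?_⟩
  rw [eval_linearSubst, LinearEquiv.coe_coe, pointFrame_rep, eval_X,
    Pi.single_eq_of_ne (Fin.succ_ne_zero i)]

variable {p}

lemma mem_pointIdeal_pow_iff {F : MvPolynomial (Fin 3) K} {m : ℕ} :
    F ∈ pointIdeal p ^ m ↔ m ≤ multAt p F := by
  rw [multAt, ← mem_axisIdeal_pow_iff]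
  refine ⟨fun hF => ?_, fun hF => ?_⟩
  · have := Ideal.mem_map_of_mem (linearSubst (pointFrame p).symm.toLinearMap) hF
    rw [Ideal.map_pow] at this
    exact Ideal.pow_right_mono (map_pointIdeal_le p) _ this
  · have := Ideal.mem_map_of_mem (linearSubst (pointFrame p).toLinearMap) hF
    rw [Ideal.map_pow, linearSubst_linearSubst_symm] at this
    exact Ideal.pow_right_mono (map_axisIdeal_le p) _ this

lemma multAt_mul (F G : MvPolynomial (Fin 3) K) :
    multAt p (F * G) = multAt p F + multAt p G := by
  rw [multAt, map_mul, axisOrder_mul, multAt, multAt]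

lemma multAt_le_of_isHomogeneous {F : MvPolynomial (Fin 3) K} {k : ℕ} (hF : F.IsHomogeneous k)
    (hF0 : F ≠ 0) : multAt p F ≤ k :=
  axisOrder_le_of_isHomogeneous (isHomogeneous_linearSubst _ hF)
    ((map_ne_zero_iff _ (linearSubst_injective _)).2 hF0)

lemma pointIdeal_le_ker_eval : pointIdeal p ≤ RingHom.ker (eval p.rep) :=
  Ideal.span_le.2 fun _ hf => hf.2

lemma multAt_eq_zero_of_eval_ne_zero {F : MvPolynomial (Fin 3) K} (hF : eval p.rep F ≠ 0) :
    multAt p F = 0 := by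
  by_contra h
  refine hF (pointIdeal_le_ker_eval ?_)
  rw [← pow_one (pointIdeal p), mem_pointIdeal_pow_iff]
  exact_mod_cast Order.one_le_iff_pos.2 (pos_iff_ne_zero.2 h)

lemma mem_pointIdeal_pow_sub_one_of_mul_mem {ℓ G : MvPolynomial (Fin 3) K} {m : ℕ}
    (hℓ : ℓ.IsHomogeneous 1) (hℓ0 : ℓ ≠ 0) (h : ℓ * G ∈ pointIdeal p ^ m) :
    G ∈ pointIdeal p ^ (m - 1) := by
  rw [mem_pointIdeal_pow_iff, multAt_mul] at h
  rw [mem_pointIdeal_pow_iff, ENat.natCast_sub, tsub_le_iff_left]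
  exact h.trans (add_le_add_left (multAt_le_of_isHomogeneous hℓ hℓ0) _)

lemma mem_pointIdeal_pow_of_mul_mem {ℓ G : MvPolynomial (Fin 3) K} {m : ℕ}
    (hℓ : eval p.rep ℓ ≠ 0) (h : ℓ * G ∈ pointIdeal p ^ m) : G ∈ pointIdeal p ^ m := by
  rwa [mem_pointIdeal_pow_iff, multAt_mul, multAt_eq_zero_of_eval_ne_zero hℓ, zero_add,
    ← mem_pointIdeal_pow_iff] at h

end Multiplicity

section Dimension

open MvPolynomial

lemma finrank_map_add_finrank_inf_ker {K V V' : Type*} [Field K] [AddCommGroup V] [Module K V]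
    [AddCommGroup V'] [Module K V'] (f : V →ₗ[K] V') (W : Submodule K V) [FiniteDimensional K W] :
    Module.finrank K (W.map f) + Module.finrank K (W ⊓ LinearMap.ker f : Submodule K V) =
      Module.finrank K W := by
  rw [← LinearMap.finrank_range_add_finrank_ker (f.domRestrict W), LinearMap.range_domRestrict,
    LinearMap.ker_domRestrict]
  congr 1
  rw [← Submodule.finrank_map_subtype_eq W, Submodule.map_comap_subtype]

variable {K : Type*} [Field K] {n : ℕ}

lemma finrank_homogeneousSubmodule (t : ℕ) :
    Module.finrank K (homogeneousSubmodule (Fin (n + 1)) K t) = (t + n).choose n := by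
  have hsupport : {d : Fin (n + 1) →₀ ℕ | d.degree = t} =
      (Finset.univ : Finset (Fin (n + 1))).finsuppAntidiag t := by
    ext d
    simp [Finset.mem_finsuppAntidiag, Finsupp.degree_eq_sum]
  rw [homogeneousSubmodule_eq_finsupp_supported, hsupport,
    (AddMonoidAlgebra.supportedEquivFinsupp _).finrank_eq, Module.finrank_finsupp_self]
  simp only [Finset.coe_sort_coe, Fintype.card_coe, Finset.card_finsuppAntidiag_nat_eq_choose,
    Finset.card_univ, Fintype.card_fin]
  rw [show n + 1 + t - 1 = t + n by omega, Nat.choose_symm_add]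

instance finite_homogeneousSubmodule (σ : Type*) [Finite σ] (t : ℕ) :
    Module.Finite K (homogeneousSubmodule σ K t) :=
  Module.Finite.iff_fg.2 (homogeneousSubmodule_fg _ _ t)

lemma mem_axisIdeal_pow_of_coeff_eq_zero {F : MvPolynomial (Fin (n + 1)) K} {k j : ℕ}
    (hF : F.IsHomogeneous (k + j))
    (h : ∀ e ∈ (Finset.univ : Finset (Fin (n + 1))).finsuppAntidiag k,
      coeff (e + Finsupp.single 0 j) F = 0) :
    F ∈ axisIdeal K n ^ (k + 1) := by
  rw [mem_axisIdeal_pow_iff, natCast_le_axisOrder_iff]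
  intro d hd
  by_cases hdeg : d.degree = k + j
  · have hsum : d 0 + ∑ i : Fin n, d i.succ = k + j := by
      rw [← hdeg, Finsupp.degree_eq_sum, Fin.sum_univ_succ]
    have hle : Finsupp.single 0 j ≤ d := Finsupp.single_le_iff.2 (by omega)
    have hmem : d - Finsupp.single 0 j ∈
        (Finset.univ : Finset (Fin (n + 1))).finsuppAntidiag k := by
      refine Finset.mem_finsuppAntidiag.2 ⟨?_, Finset.subset_univ _⟩
      rw [Fin.sum_univ_succ]
      simp only [Finsupp.tsub_apply, Finsupp.single_eq_same,
        Finsupp.single_eq_of_ne (Fin.succ_ne_zero _), tsub_zero]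
      omega
    simpa only [tsub_add_cancel_of_le hle] using h _ hmem
  · exact hF.coeff_eq_zero hdeg

end Dimension

section FatPoints

open MvPolynomial

variable {K : Type} [Field K]

lemma finrank_le_finrank_inf_pointIdeal_pow_add (p : P2 K)
    {W : Submodule K (MvPolynomial (Fin 3) K)} {t : ℕ}
    (hW : W ≤ homogeneousSubmodule (Fin 3) K t) (m : ℕ) :
    Module.finrank K W ≤ Module.finrank K
      (W ⊓ (pointIdeal p ^ m).restrictScalars K : Submodule K (MvPolynomial (Fin 3) K)) +
        (m + 1).choose 2 := by
  have : FiniteDimensional K W := Submodule.finiteDimensional_of_le hW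
  rcases m with - | k
  · rw [pow_zero, Ideal.one_eq_top, Submodule.restrictScalars_top, inf_top_eq]
    exact Nat.le_add_right _ _
  rcases le_or_gt t k with htk | hkt
  · calc Module.finrank K W ≤ (t + 2).choose 2 := by
          rw [← finrank_homogeneousSubmodule (K := K)]
          exact Submodule.finrank_mono hW
      _ ≤ (k + 1 + 1).choose 2 := Nat.choose_le_choose 2 (by omega)
      _ ≤ _ := Nat.le_add_left _ _
  obtain ⟨j, rfl⟩ := Nat.exists_eq_add_of_le hkt.le
  let coeffs : MvPolynomial (Fin 3) K →ₗ[K]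
      ((Finset.univ : Finset (Fin 3)).finsuppAntidiag k → K) :=
    (LinearMap.pi fun e => lcoeff K (e.1 + Finsupp.single 0 j)) ∘ₗ
      (linearSubst (pointFrame p).symm.toLinearMap).toLinearMap
  have hker : W ⊓ LinearMap.ker coeffs ≤ W ⊓ (pointIdeal p ^ (k + 1)).restrictScalars K := by
    refine fun F hF => ⟨hF.1, mem_pointIdeal_pow_iff.2 (mem_axisIdeal_pow_iff.1 ?_)⟩
    exact mem_axisIdeal_pow_of_coeff_eq_zero (isHomogeneous_linearSubst _ (hW hF.1))
      fun e he => congrFun (LinearMap.mem_ker.1 hF.2) ⟨e, he⟩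
  have hrange : Module.finrank K (W.map coeffs) ≤ (k + 1 + 1).choose 2 := by
    refine (Submodule.finrank_le _).trans_eq ?_
    rw [Module.finrank_fintype_fun_eq_card, Fintype.card_coe,
      Finset.card_finsuppAntidiag_nat_eq_choose, Finset.card_univ, Fintype.card_fin,
      show 3 + k - 1 = k + 2 by omega, Nat.choose_symm_add]
  rw [← finrank_map_add_finrank_inf_ker coeffs W, add_comm]
  exact add_le_add (Submodule.finrank_mono hker) hrange

/-- The linear system of plane curves of degree `t` having multiplicity at least `μ p` at each
point `p` of `S`, that is, the degree `t` part of the ideal of the fat point scheme `∑ μ p • p`. -/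
noncomputable def fatSystem (S : Finset (P2 K)) (μ : P2 K → ℕ) (t : ℕ) :
    Submodule K (MvPolynomial (Fin 3) K) :=
  (⨅ p ∈ S, pointIdeal p ^ μ p).restrictScalars K ⊓ homogeneousSubmodule (Fin 3) K t

/-- The degree of the fat point scheme `∑ μ p • p` supported in `S`: the number of linear
conditions expected from it. -/
def fatDegree (S : Finset (P2 K)) (μ : P2 K → ℕ) : ℕ :=
  ∑ p ∈ S, (μ p + 1).choose 2

variable {S : Finset (P2 K)} {μ : P2 K → ℕ} {t : ℕ}

lemma mem_fatSystem {F : MvPolynomial (Fin 3) K} :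
    F ∈ fatSystem S μ t ↔ (∀ p ∈ S, F ∈ pointIdeal p ^ μ p) ∧ F.IsHomogeneous t := by
  simp only [fatSystem, Submodule.mem_inf, Submodule.restrictScalars_mem, Submodule.mem_iInf,
    mem_homogeneousSubmodule]

lemma fatSystem_le_homogeneousSubmodule : fatSystem S μ t ≤ homogeneousSubmodule (Fin 3) K t :=
  inf_le_right

instance finite_fatSystem : Module.Finite K (fatSystem S μ t) :=
  Submodule.finiteDimensional_of_le fatSystem_le_homogeneousSubmodule

lemma finrank_fatSystem_le : Module.finrank K (fatSystem S μ t) ≤ (t + 2).choose 2 := by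
  rw [← finrank_homogeneousSubmodule (K := K)]
  exact Submodule.finrank_mono fatSystem_le_homogeneousSubmodule

lemma choose_two_le_finrank_fatSystem_add_fatDegree :
    (t + 2).choose 2 ≤ Module.finrank K (fatSystem S μ t) + fatDegree S μ := by
  classical
  induction S using Finset.induction_on with
  | empty =>
    have hle : homogeneousSubmodule (Fin 3) K t ≤ fatSystem ∅ μ t := fun F hF =>
      mem_fatSystem.2 ⟨fun p hp => absurd hp (Finset.notMem_empty p), hF⟩
    rw [← finrank_homogeneousSubmodule (K := K)]
    exact (Submodule.finrank_mono hle).trans (Nat.le_add_right _ _)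
  | insert p S hp ih =>
    have hinsert : fatSystem S μ t ⊓ (pointIdeal p ^ μ p).restrictScalars K =
        fatSystem (insert p S) μ t := by
      ext F
      rw [Submodule.mem_inf, mem_fatSystem, mem_fatSystem, Submodule.restrictScalars_mem,
        Finset.forall_mem_insert]
      tauto
    have hcond := finrank_le_finrank_inf_pointIdeal_pow_add p
      (fatSystem_le_homogeneousSubmodule (S := S) (μ := μ) (t := t)) (μ p)
    rw [hinsert] at hcond
    rw [fatDegree, Finset.sum_insert hp, ← fatDegree]
    omega

end FatPoints

section BinaryForms

open MvPolynomial

lemma homogeneousComponent_mul_of_isHomogeneous_left {σ K : Type*} [CommSemiring K]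
    {D : MvPolynomial σ K} {d : ℕ} (hD : D.IsHomogeneous d) (G : MvPolynomial σ K) (t : ℕ) :
    homogeneousComponent t (D * G) = if d ≤ t then D * homogeneousComponent (t - d) G else 0 := by
  classical
  let := gradedAlgebra (σ := σ) (R := K)
  rw [← decomposition.decompose'_apply, ← decomposition.decompose'_apply]
  exact DirectSum.coe_decompose_mul_of_left_mem (homogeneousSubmodule σ K) t hD

variable {K : Type*} [Field K]

lemma finrank_le_of_forall_dvd {D : MvPolynomial (Fin 2) K} {d t : ℕ} (hD : D.IsHomogeneous d)
    {W : Submodule K (MvPolynomial (Fin 2) K)} (hW : W ≤ homogeneousSubmodule (Fin 2) K t)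
    (hdvd : ∀ F ∈ W, D ∣ F) : Module.finrank K W ≤ t + 1 - d := by
  have hquotient : ∀ F ∈ W, ∃ G,
      F = if d ≤ t then D * homogeneousComponent (t - d) G else 0 := fun F hF => by
    obtain ⟨G, hG⟩ := hdvd F hF
    refine ⟨G, ?_⟩
    rw [← homogeneousComponent_mul_of_isHomogeneous_left hD, ← hG,
      homogeneousComponent_eq_self (hW hF)]
  rcases le_or_gt d t with hdt | htd
  · have hle : W ≤ (homogeneousSubmodule (Fin 2) K (t - d)).map (LinearMap.mulLeft K D) :=
      fun F hF => by
        obtain ⟨G, hG⟩ := hquotient F hF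
        rw [if_pos hdt] at hG
        exact ⟨_, homogeneousComponent_mem _ _, hG.symm⟩
    calc Module.finrank K W ≤ _ := Submodule.finrank_mono hle
      _ ≤ _ := Submodule.finrank_map_le _ _
      _ = t + 1 - d := by
        rw [finrank_homogeneousSubmodule, Nat.choose_one_right, Nat.sub_add_comm hdt]
  · have hbot : W = ⊥ := (Submodule.eq_bot_iff W).2 fun F hF => by
      obtain ⟨G, hG⟩ := hquotient F hF
      rwa [if_neg htd.not_ge] at hG
    rw [hbot, finrank_bot]
    exact Nat.zero_le _

lemma irreducible_of_isHomogeneous_one {σ : Type*} {F : MvPolynomial σ K} (hF : F.IsHomogeneous 1)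
    (hF0 : F ≠ 0) : Irreducible F := by
  refine irreducible_of_totalDegree_eq_one (hF.totalDegree hF0) fun x hx => ?_
  obtain ⟨d, hd⟩ := ne_zero_iff.1 hF0
  exact isUnit_iff_ne_zero.2 (ne_zero_of_dvd_ne_zero hd (hx d))

/-- The linear form in two variables cutting out the point `[a 0 : a 1]` of the projective line. -/
noncomputable def binaryForm (a : Fin 2 → K) : MvPolynomial (Fin 2) K :=
  C (a 1) * X 0 - C (a 0) * X 1

variable {a b : Fin 2 → K}

lemma isHomogeneous_binaryForm : (binaryForm a).IsHomogeneous 1 :=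
  (isHomogeneous_C_mul_X _ _).sub (isHomogeneous_C_mul_X _ _)

lemma eval_binaryForm : eval b (binaryForm a) = a 1 * b 0 - a 0 * b 1 := by
  simp [binaryForm]

lemma eval_binaryForm_comm : eval b (binaryForm a) = -eval a (binaryForm b) := by
  rw [eval_binaryForm, eval_binaryForm]
  ring

lemma binaryForm_ne_zero (ha : a ≠ 0) : binaryForm a ≠ 0 := by
  contrapose! ha
  have heval : ∀ b : Fin 2 → K, a 1 * b 0 - a 0 * b 1 = 0 := fun b => by
    rw [← eval_binaryForm, ha, map_zero]
  have h₀ := heval ![0, 1]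
  have h₁ := heval ![1, 0]
  ext i
  fin_cases i <;> simp_all

lemma exists_smul_eq_of_eval_binaryForm_eq_zero (ha : a ≠ 0) (h : eval b (binaryForm a) = 0) :
    ∃ c : K, c • a = b := by
  rw [eval_binaryForm, sub_eq_zero] at h
  have hcross : ∀ i j, b i * a j = b j * a i := by
    refine Fin.forall_fin_two.2 ⟨Fin.forall_fin_two.2 ⟨rfl, ?_⟩, Fin.forall_fin_two.2 ⟨?_, rfl⟩⟩
    · linear_combination h
    · linear_combination -h
  obtain ⟨i, hi⟩ := Function.ne_iff.1 ha
  refine ⟨b i / a i, funext fun j => ?_⟩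
  rw [Pi.smul_apply, smul_eq_mul, div_mul_eq_mul_div, hcross, mul_div_cancel_right₀ _ hi]

lemma binaryForm_smul (c : K) : binaryForm (c • a) = C c * binaryForm a := by
  simp only [binaryForm, Pi.smul_apply, smul_eq_mul, C_mul]
  ring

lemma exists_eq_binaryForm {F : MvPolynomial (Fin 2) K} (hF : F.IsHomogeneous 1) :
    ∃ b, F = binaryForm b := by
  rw [← mem_homogeneousSubmodule, homogeneousSubmodule_one_eq_span_X,
    Submodule.mem_span_range_iff_exists_fun] at hF
  obtain ⟨c, rfl⟩ := hF
  exact ⟨![-c 1, c 0], by simp [binaryForm, smul_eq_C_mul, Fin.sum_univ_two]⟩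

lemma binaryForm_dvd_iff (ha : a ≠ 0) {F : MvPolynomial (Fin 2) K} (hF : F.IsHomogeneous 1) :
    binaryForm a ∣ F ↔ eval a F = 0 := by
  refine ⟨fun ⟨G, hG⟩ => ?_, fun h => ?_⟩
  · rw [hG, map_mul, eval_binaryForm, mul_comm (a 1), sub_self, zero_mul]
  · obtain ⟨b, rfl⟩ := exists_eq_binaryForm hF
    rw [eval_binaryForm_comm, neg_eq_zero] at h
    obtain ⟨c, rfl⟩ := exists_smul_eq_of_eval_binaryForm_eq_zero ha h
    rw [binaryForm_smul]
    exact dvd_mul_left _ _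

lemma isRelPrime_binaryForm (ha : a ≠ 0) (h : ∀ c : K, c • a ≠ b) :
    IsRelPrime (binaryForm a) (binaryForm b) := by
  rw [(irreducible_of_isHomogeneous_one isHomogeneous_binaryForm
    (binaryForm_ne_zero ha)).isRelPrime_iff_not_dvd, binaryForm_dvd_iff ha isHomogeneous_binaryForm,
    eval_binaryForm_comm, neg_eq_zero]
  intro hab
  obtain ⟨c, hc⟩ := exists_smul_eq_of_eval_binaryForm_eq_zero ha hab
  exact h c hc

end BinaryForms

namespace ProjLine

open MvPolynomial

variable {K : Type} [Field K] (L : ProjLine K)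

lemma mem_points_iff {p : P2 K} : p ∈ L.points ↔ p.rep ∈ L.toSubmodule := by
  change p.submodule ≤ _ ↔ _
  rw [Projectivization.submodule_eq, Submodule.span_singleton_le_iff_mem]

lemma exists_frame : ∃ e : (Fin 3 → K) ≃ₗ[K] (Fin 3 → K), ∀ v, v ∈ L.toSubmodule ↔ e v 0 = 0 := by
  obtain ⟨N, hN⟩ := Submodule.exists_isCompl L.toSubmodule
  have hrank : Module.finrank K N = 1 := by
    have := Submodule.finrank_add_eq_of_isCompl hN
    rw [L.finrank_eq_two, Module.finrank_fin_fun] at this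
    omega
  obtain ⟨y, hyN, hy⟩ := N.ne_bot_iff.1 (Submodule.one_le_finrank_iff.1 hrank.ge)
  have hNy : K ∙ y = N := Submodule.eq_of_le_of_finrank_eq
    ((Submodule.span_singleton_le_iff_mem y N).2 hyN) (by rw [finrank_span_singleton hy, hrank])
  obtain ⟨e, -, he⟩ := exists_linearEquiv_cons hy (hNy ▸ hN.symm) L.finrank_eq_two
  exact ⟨e, he⟩

/-- Linear coordinates on `K³` in which the line `L` is given by `x₀ = 0`. -/
noncomputable def frame : (Fin 3 → K) ≃ₗ[K] (Fin 3 → K) :=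
  L.exists_frame.choose

lemma mem_toSubmodule_iff {v : Fin 3 → K} : v ∈ L.toSubmodule ↔ L.frame v 0 = 0 :=
  L.exists_frame.choose_spec v

/-- A linear form defining the line `L`. -/
noncomputable def equation : MvPolynomial (Fin 3) K :=
  linearSubst L.frame.toLinearMap (X 0)

lemma isHomogeneous_equation : L.equation.IsHomogeneous 1 :=
  isHomogeneous_linearSubst _ (isHomogeneous_X _ _)

lemma equation_ne_zero : L.equation ≠ 0 :=
  (map_ne_zero_iff _ (linearSubst_injective _)).2 (X_ne_zero 0)

lemma eval_equation_eq_zero_iff {p : P2 K} : eval p.rep L.equation = 0 ↔ p ∈ L.points := by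
  rw [equation, eval_linearSubst, eval_X, mem_points_iff, mem_toSubmodule_iff, LinearEquiv.coe_coe]

/-- The restriction of a form to the line `L`, as a form in the last two coordinates of
`L.frame`. -/
noncomputable def restrict : MvPolynomial (Fin 3) K →ₐ[K] MvPolynomial (Fin 2) K :=
  linearSubst (f := L.frame.symm.toLinearMap ∘ₗ consZero K 2)

variable {L} in
lemma isHomogeneous_restrict {F : MvPolynomial (Fin 3) K} {t : ℕ} (hF : F.IsHomogeneous t) :
    (L.restrict F).IsHomogeneous t :=
  isHomogeneous_linearSubst _ hF

lemma equation_dvd_of_restrict_eq_zero {F : MvPolynomial (Fin 3) K} (hF : L.restrict F = 0) :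
    L.equation ∣ F := by
  rw [restrict, ← linearSubst_comp, AlgHom.comp_apply] at hF
  rw [← linearSubst_linearSubst_symm L.frame F]
  exact map_dvd _ (X_zero_dvd_of_linearSubst_consZero_eq_zero hF)

/-- The homogeneous coordinates of a point of the line `L` in the last two coordinates of
`L.frame`. -/
noncomputable def coord (p : P2 K) : Fin 2 → K :=
  Fin.tail (L.frame p.rep)

variable {L} {p q : P2 K}

lemma consZero_coord (hp : p ∈ L.points) : consZero K 2 (L.coord p) = L.frame p.rep := by
  rw [mem_points_iff, mem_toSubmodule_iff] at hp
  rw [consZero_apply, coord, ← hp, Fin.cons_self_tail]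

lemma coord_ne_zero (hp : p ∈ L.points) : L.coord p ≠ 0 := by
  intro h
  have := consZero_coord hp
  rw [h, map_zero, eq_comm, LinearEquiv.map_eq_zero_iff] at this
  exact p.rep_nonzero this

lemma smul_coord_ne_coord (hp : p ∈ L.points) (hq : q ∈ L.points) (hpq : p ≠ q) (c : K) :
    c • L.coord p ≠ L.coord q := by
  intro h
  have hrep := consZero_coord hq
  rw [← h, map_smul, consZero_coord hp, ← map_smul, L.frame.injective.eq_iff] at hrep
  refine hpq (Eq.symm ?_)
  rw [← p.mk_rep, ← q.mk_rep, Projectivization.mk_eq_mk_iff']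
  exact ⟨c, hrep⟩

lemma eval_coord_restrict (hp : p ∈ L.points) (F : MvPolynomial (Fin 3) K) :
    eval (L.coord p) (L.restrict F) = eval p.rep F := by
  rw [restrict, eval_linearSubst, LinearMap.comp_apply, consZero_coord hp, LinearEquiv.coe_coe,
    LinearEquiv.symm_apply_apply]

lemma binaryForm_pow_dvd_restrict (hp : p ∈ L.points) {F : MvPolynomial (Fin 3) K} {m : ℕ}
    (hF : F ∈ pointIdeal p ^ m) : binaryForm (L.coord p) ^ m ∣ L.restrict F := by
  have hle : (pointIdeal p).map L.restrict ≤ Ideal.span {binaryForm (L.coord p)} := by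
    rw [pointIdeal, Ideal.map_span, Ideal.span_le]
    rintro _ ⟨f, ⟨hf, hf0⟩, rfl⟩
    refine Ideal.mem_span_singleton.2
      ((binaryForm_dvd_iff (coord_ne_zero hp) (isHomogeneous_restrict hf)).2 ?_)
    rw [eval_coord_restrict hp, hf0]
  have hmem := Ideal.mem_map_of_mem L.restrict hF
  rw [Ideal.map_pow] at hmem
  rw [← Ideal.mem_span_singleton, ← Ideal.span_singleton_pow]
  exact Ideal.pow_right_mono hle m hmem

lemma exists_mem_mem_points (p q : P2 K) : ∃ L : ProjLine K, p ∈ L.points ∧ q ∈ L.points := by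
  obtain ⟨y, hy, hq⟩ : ∃ y, LinearIndependent K ![p.rep, y] ∧ q.rep ∈ Set.range ![p.rep, y] := by
    rcases eq_or_ne p q with rfl | hpq
    · obtain ⟨y, hy⟩ := exists_linearIndependent_pair_of_one_lt_finrank (R := K)
        (by rw [Module.finrank_fin_fun]; norm_num) p.rep_nonzero
      exact ⟨y, hy, 0, rfl⟩
    · exact ⟨q.rep, Projectivization.linearIndependent_pair_iff_ne.2 hpq, 1, rfl⟩
  exact ⟨⟨Submodule.span K (Set.range ![p.rep, y]), finrank_span_eq_card hy⟩,
    (mem_points_iff _).2 (Submodule.subset_span ⟨0, rfl⟩),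
    (mem_points_iff _).2 (Submodule.subset_span hq)⟩

lemma toSubmodule_eq_span_pair (hpq : p ≠ q) (hp : p ∈ L.points) (hq : q ∈ L.points) :
    L.toSubmodule = Submodule.span K (Set.range ![p.rep, q.rep]) := by
  have hindep := Projectivization.linearIndependent_pair_iff_ne.2 hpq
  refine (Submodule.eq_of_le_of_finrank_eq (Submodule.span_le.2 ?_) ?_).symm
  · rw [Set.range_subset_iff, Fin.forall_fin_two]
    exact ⟨L.mem_points_iff.1 hp, L.mem_points_iff.1 hq⟩
  · rw [finrank_span_eq_card hindep, L.finrank_eq_two, Fintype.card_fin]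

lemma eq_of_mem_points {M : ProjLine K} (hpq : p ≠ q) (hpL : p ∈ L.points) (hqL : q ∈ L.points)
    (hpM : p ∈ M.points) (hqM : q ∈ M.points) : L = M := by
  cases L
  cases M
  simpa only [mk.injEq] using (toSubmodule_eq_span_pair hpq hpL hqL).trans
    (toSubmodule_eq_span_pair hpq hpM hqM).symm

end ProjLine

section Residual

open MvPolynomial

variable {K : Type} [Field K] {L : ProjLine K} {S : Finset (P2 K)} {μ : P2 K → ℕ} {t : ℕ}

namespace ProjLine

open Classical in
/-- The points of the finite set `S` lying on the line `L`. -/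
noncomputable def pointsIn (L : ProjLine K) (S : Finset (P2 K)) : Finset (P2 K) :=
  {p ∈ S | p ∈ L.points}

lemma mem_pointsIn {p : P2 K} : p ∈ L.pointsIn S ↔ p ∈ S ∧ p ∈ L.points := by
  classical
  exact Finset.mem_filter

lemma pointsIn_subset (L : ProjLine K) : L.pointsIn S ⊆ S := fun _ hp => (mem_pointsIn.1 hp).1

lemma restrict_equation : L.restrict L.equation = 0 := by
  rw [restrict, ← linearSubst_comp, AlgHom.comp_apply, equation]
  exact (congrArg _ (linearSubst_linearSubst_symm L.frame.symm (X 0))).trans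
    linearSubst_consZero_X_zero

lemma isHomogeneous_equation_mul_iff {G : MvPolynomial (Fin 3) K} :
    (L.equation * G).IsHomogeneous (t + 1) ↔ G.IsHomogeneous t := by
  refine ⟨fun h => ?_, fun h => add_comm 1 t ▸ L.isHomogeneous_equation.mul h⟩
  have hcomponent :=
    homogeneousComponent_mul_of_isHomogeneous_left L.isHomogeneous_equation G (t + 1)
  rw [homogeneousComponent_eq_self h, if_pos (Nat.le_add_left _ _),
    Nat.add_sub_cancel] at hcomponent
  rw [mul_left_cancel₀ L.equation_ne_zero hcomponent]
  exact homogeneousComponent_isHomogeneous _ _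

lemma equation_mul_mem_pointIdeal_pow_iff {G : MvPolynomial (Fin 3) K} {p : P2 K} {m : ℕ} :
    L.equation * G ∈ pointIdeal p ^ m ↔ G ∈ pointIdeal p ^ (m - L.points.indicator 1 p) := by
  by_cases hp : p ∈ L.points
  · rw [Set.indicator_of_mem hp, Pi.one_apply]
    refine ⟨mem_pointIdeal_pow_sub_one_of_mul_mem L.isHomogeneous_equation L.equation_ne_zero,
      fun hG => Ideal.pow_le_pow_right (n := 1 + (m - 1)) (by omega) ?_⟩
    rw [pow_add, pow_one]
    exact Ideal.mul_mem_mul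
      (Ideal.subset_span ⟨L.isHomogeneous_equation, L.eval_equation_eq_zero_iff.2 hp⟩) hG
  · rw [Set.indicator_of_notMem hp, Nat.sub_zero]
    exact ⟨mem_pointIdeal_pow_of_mul_mem (mt L.eval_equation_eq_zero_iff.1 hp),
      Ideal.mul_mem_left _ _⟩

lemma equation_mul_mem_fatSystem_iff {G : MvPolynomial (Fin 3) K} :
    L.equation * G ∈ fatSystem S μ (t + 1) ↔ G ∈ fatSystem S (μ - L.points.indicator 1) t := by
  simp only [mem_fatSystem, isHomogeneous_equation_mul_iff, equation_mul_mem_pointIdeal_pow_iff,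
    Pi.sub_apply]

end ProjLine

lemma fatSystem_inf_ker_restrict :
    fatSystem S μ (t + 1) ⊓ LinearMap.ker L.restrict.toLinearMap =
      (fatSystem S (μ - L.points.indicator 1) t).map (LinearMap.mulLeft K L.equation) := by
  ext F
  refine ⟨fun ⟨hF, hker⟩ => ?_, ?_⟩
  · obtain ⟨G, rfl⟩ := L.equation_dvd_of_restrict_eq_zero hker
    exact ⟨G, ProjLine.equation_mul_mem_fatSystem_iff.1 hF, rfl⟩
  · rintro ⟨G, hG, rfl⟩
    refine ⟨ProjLine.equation_mul_mem_fatSystem_iff.2 hG, ?_⟩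
    change L.restrict (L.equation * G) = 0
    rw [map_mul, ProjLine.restrict_equation, zero_mul]

lemma finrank_map_restrict_fatSystem_le :
    Module.finrank K ((fatSystem S μ t).map L.restrict.toLinearMap) ≤
      t + 1 - ∑ p ∈ L.pointsIn S, μ p := by
  have hhom : (∏ p ∈ L.pointsIn S, binaryForm (L.coord p) ^ μ p).IsHomogeneous
      (∑ p ∈ L.pointsIn S, μ p) :=
    IsHomogeneous.prod _ _ _ fun p _ => by
      simpa only [one_mul] using isHomogeneous_binaryForm.pow (μ p)
  have hle : (fatSystem S μ t).map L.restrict.toLinearMap ≤ homogeneousSubmodule (Fin 2) K t :=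
    Submodule.map_le_iff_le_comap.2 fun F hF =>
      ProjLine.isHomogeneous_restrict (mem_fatSystem.1 hF).2
  refine finrank_le_of_forall_dvd hhom hle ?_
  rintro _ ⟨F, hF, rfl⟩
  refine Finset.prod_dvd_of_isRelPrime (fun p hp q hq hpq => ?_) fun p hp => ?_
  · exact (isRelPrime_binaryForm (ProjLine.coord_ne_zero (ProjLine.mem_pointsIn.1 hp).2)
      (ProjLine.smul_coord_ne_coord (ProjLine.mem_pointsIn.1 hp).2
        (ProjLine.mem_pointsIn.1 hq).2 hpq)).pow
  · obtain ⟨hpS, hpL⟩ := ProjLine.mem_pointsIn.1 hp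
    exact ProjLine.binaryForm_pow_dvd_restrict hpL ((mem_fatSystem.1 hF).1 p hpS)

lemma finrank_fatSystem_succ :
    Module.finrank K (fatSystem S μ (t + 1)) =
      Module.finrank K ((fatSystem S μ (t + 1)).map L.restrict.toLinearMap) +
        Module.finrank K (fatSystem S (μ - L.points.indicator 1) t) := by
  rw [← finrank_map_add_finrank_inf_ker L.restrict.toLinearMap, fatSystem_inf_ker_restrict,
    ← (Submodule.equivMapOfInjective (LinearMap.mulLeft K L.equation)
      (mul_right_injective₀ L.equation_ne_zero) _).finrank_eq]

lemma finrank_fatSystem_residual_le :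
    Module.finrank K (fatSystem S (μ - L.points.indicator 1) t) ≤
      Module.finrank K (fatSystem S μ (t + 1)) := by
  rw [finrank_fatSystem_succ (L := L)]
  exact Nat.le_add_left _ _

lemma finrank_fatSystem_succ_le :
    Module.finrank K (fatSystem S μ (t + 1)) ≤ (t + 2 - ∑ p ∈ L.pointsIn S, μ p) +
        Module.finrank K (fatSystem S (μ - L.points.indicator 1) t) := by
  rw [finrank_fatSystem_succ (L := L)]
  exact Nat.add_le_add_right finrank_map_restrict_fatSystem_le _

end Residual

section LineArrangements

variable {K : Type} [Field K] {S : Finset (P2 K)} {μ : P2 K → ℕ} {t : ℕ}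

/-- The number of lines of the arrangement `A` passing through a point. -/
noncomputable def lineMult (A : Finset (ProjLine K)) : P2 K → ℕ :=
  ∑ L ∈ A, L.points.indicator 1

lemma lineMult_empty : lineMult (∅ : Finset (ProjLine K)) = 0 :=
  Finset.sum_empty

lemma tsub_lineMult_insert [DecidableEq (ProjLine K)] {L : ProjLine K} {A : Finset (ProjLine K)}
    (hL : L ∉ A) : μ - lineMult (insert L A) = μ - lineMult A - L.points.indicator 1 := by
  rw [lineMult, Finset.sum_insert hL, add_comm, ← lineMult, tsub_add_eq_tsub_tsub]

lemma finrank_fatSystem_add_card_eq {B : Finset (ProjLine K)}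
    (h : ∀ A ⊆ B, ∀ L ∈ B, L ∉ A →
      t + B.card < A.card + ∑ p ∈ L.pointsIn S, (μ - lineMult A) p) :
    Module.finrank K (fatSystem S μ (t + B.card)) =
      Module.finrank K (fatSystem S (μ - lineMult B) t) := by
  classical
  induction B using Finset.induction_on generalizing t with
  | empty => rw [Finset.card_empty, add_zero, lineMult_empty, tsub_zero]
  | insert L B hL ih =>
    rw [Finset.card_insert_of_notMem hL] at h ⊢
    have hfixed := h B (Finset.subset_insert L B) L (Finset.mem_insert_self L B) hL
    have hpeel := finrank_fatSystem_succ_le (L := L) (S := S) (μ := μ - lineMult B) (t := t)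
    rw [Nat.sub_eq_zero_of_le (by omega), zero_add] at hpeel
    rw [tsub_lineMult_insert hL, ← hpeel.antisymm finrank_fatSystem_residual_le, ← ih,
      add_right_comm, add_assoc]
    · intro A hA M hM hMA
      have := h A (hA.trans (Finset.subset_insert L B)) M (Finset.mem_insert_of_mem hM) hMA
      omega

end LineArrangements

section IndependentConditions

variable {K : Type} [Field K]

/-- The fat point scheme `∑ μ p • p` imposes independent conditions on plane curves of degree `t`:
its linear system has the expected dimension. -/
def ImposesIndependentConditions (S : Finset (P2 K)) (μ : P2 K → ℕ) (t : ℕ) : Prop :=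
  Module.finrank K (fatSystem S μ t) + fatDegree S μ = (t + 2).choose 2

variable {S : Finset (P2 K)} {μ : P2 K → ℕ} {t : ℕ}

lemma succ_add_two_choose_two (n : ℕ) : (n + 1 + 2).choose 2 = n + 2 + (n + 2).choose 2 := by
  rw [add_right_comm, Nat.choose_succ_succ', Nat.choose_one_right]

lemma fatDegree_eq_residual_add (L : ProjLine K) :
    fatDegree S μ = fatDegree S (μ - L.points.indicator 1) + ∑ p ∈ L.pointsIn S, μ p := by
  rw [ProjLine.pointsIn, Finset.sum_filter, fatDegree, fatDegree, ← Finset.sum_add_distrib]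
  refine Finset.sum_congr rfl fun p _ => ?_
  rw [Pi.sub_apply]
  split_ifs with hp
  · rw [Set.indicator_of_mem hp, Pi.one_apply]
    rcases μ p with - | n
    · rfl
    · rw [Nat.choose_succ_succ', Nat.choose_one_right, Nat.add_sub_cancel, add_comm]
  · rw [Set.indicator_of_notMem hp, Nat.sub_zero, add_zero]

lemma fatDegree_eq_sum (h : ∀ p ∈ S, μ p ≤ 1) : fatDegree S μ = ∑ p ∈ S, μ p := by
  refine Finset.sum_congr rfl fun p hp => ?_
  have := h p hp
  interval_cases μ p <;> rfl

lemma fatSystem_eq_bot_of_lt {p : P2 K} (hp : p ∈ S) (h : t < μ p) : fatSystem S μ t = ⊥ := by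
  refine (Submodule.eq_bot_iff _).2 fun F hF => ?_
  by_contra hF0
  have hmult := (mem_pointIdeal_pow_iff.1 ((mem_fatSystem.1 hF).1 p hp)).trans
    (multAt_le_of_isHomogeneous (mem_fatSystem.1 hF).2 hF0)
  exact h.not_ge (Nat.cast_le.1 hmult)

lemma sum_residual_add_card_le {L : ProjLine K} {T : Finset (P2 K)} (hTS : T ⊆ L.pointsIn S)
    (hT : ∀ p ∈ T, μ p ≠ 0) :
    ∑ p ∈ S, (μ - L.points.indicator 1 : P2 K → ℕ) p + T.card ≤ ∑ p ∈ S, μ p := by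
  classical
  have hTS' : T ⊆ S := hTS.trans L.pointsIn_subset
  rw [← Finset.sum_sdiff hTS', ← Finset.sum_sdiff hTS', add_assoc, Finset.card_eq_sum_ones,
    ← Finset.sum_add_distrib]
  refine add_le_add (Finset.sum_le_sum fun p _ => Nat.sub_le _ _) (Finset.sum_le_sum fun p hp => ?_)
  rw [Pi.sub_apply, Set.indicator_of_mem (ProjLine.mem_pointsIn.1 (hTS hp)).2, Pi.one_apply,
    Nat.sub_add_cancel (Nat.one_le_iff_ne_zero.2 (hT p hp))]

namespace ImposesIndependentConditions

lemma of_forall_eq_zero (h : ∀ p ∈ S, μ p = 0) : ImposesIndependentConditions S μ t := by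
  have hdeg : fatDegree S μ = 0 := Finset.sum_eq_zero fun p hp => by rw [h p hp]; rfl
  refine le_antisymm ?_ choose_two_le_finrank_fatSystem_add_fatDegree
  rw [hdeg]
  exact finrank_fatSystem_le

lemma of_residual (L : ProjLine K) (hL : ∑ p ∈ L.pointsIn S, μ p ≤ t + 2)
    (h : ImposesIndependentConditions S (μ - L.points.indicator 1) t) :
    ImposesIndependentConditions S μ (t + 1) := by
  refine le_antisymm ?_ choose_two_le_finrank_fatSystem_add_fatDegree
  have hpeel := finrank_fatSystem_succ_le (L := L) (S := S) (μ := μ) (t := t)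
  rw [ImposesIndependentConditions] at h
  rw [fatDegree_eq_residual_add L, succ_add_two_choose_two]
  omega

lemma of_tsub_lineMult {B : Finset (ProjLine K)}
    (h : ∀ A ⊆ B, ∀ L ∈ B, L ∉ A →
      A.card + ∑ p ∈ L.pointsIn S, (μ - lineMult A) p ≤ t + B.card + 1)
    (hB : ImposesIndependentConditions S (μ - lineMult B) t) :
    ImposesIndependentConditions S μ (t + B.card) := by
  classical
  induction B using Finset.induction_on generalizing t with
  | empty => rwa [lineMult_empty, tsub_zero] at hB
  | insert L B hL ih =>
    rw [tsub_lineMult_insert hL] at hB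
    rw [Finset.card_insert_of_notMem hL] at h ⊢
    rw [← add_assoc, add_right_comm]
    refine ih (fun A hA M hM hMA => ?_) (hB.of_residual L ?_)
    · have := h A (hA.trans (Finset.subset_insert L B)) M (Finset.mem_insert_of_mem hM) hMA
      omega
    · have := h B (Finset.subset_insert L B) L (Finset.mem_insert_self L B) hL
      omega

lemma of_sum_le_one (h : ∑ p ∈ S, μ p ≤ 1) : ImposesIndependentConditions S μ 0 := by
  by_cases hzero : ∀ p ∈ S, μ p = 0
  · exact of_forall_eq_zero hzero
  push Not at hzero
  obtain ⟨a, haS, ha⟩ := hzero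
  have hle : ∀ p ∈ S, μ p ≤ 1 := fun p hp =>
    (Finset.single_le_sum (fun _ _ => Nat.zero_le _) hp).trans h
  refine le_antisymm ?_ choose_two_le_finrank_fatSystem_add_fatDegree
  rw [fatSystem_eq_bot_of_lt haS (Nat.pos_of_ne_zero ha), finrank_bot, zero_add,
    fatDegree_eq_sum hle]
  exact h

lemma of_sum_le_succ (h : ∑ p ∈ S, μ p ≤ t + 1) : ImposesIndependentConditions S μ t := by
  induction t generalizing μ with
  | zero => exact of_sum_le_one h
  | succ t ih =>
    by_cases hzero : ∀ p ∈ S, μ p = 0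
    · exact of_forall_eq_zero hzero
    push Not at hzero
    obtain ⟨a, haS, ha⟩ := hzero
    obtain ⟨L, haL, -⟩ := ProjLine.exists_mem_mem_points a a
    have hTL : {a} ⊆ L.pointsIn S :=
      Finset.singleton_subset_iff.2 (ProjLine.mem_pointsIn.2 ⟨haS, haL⟩)
    have hresidual := sum_residual_add_card_le (μ := μ) hTL fun p hp => by
      rwa [Finset.mem_singleton.1 hp]
    rw [Finset.card_singleton] at hresidual
    exact of_residual L ((Finset.sum_le_sum_of_subset L.pointsIn_subset).trans h) (ih (by omega))

lemma of_sum_le_of_noncollinear (h : ∑ p ∈ S, μ p ≤ t + 2)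
    (hnoncol : ∀ L : ProjLine K, ∃ p ∈ S, μ p ≠ 0 ∧ p ∉ L.points) :
    ImposesIndependentConditions S μ t := by
  classical
  by_cases hzero : ∀ p ∈ S, μ p = 0
  · exact of_forall_eq_zero hzero
  push Not at hzero
  obtain ⟨a, haS, ha⟩ := hzero
  obtain ⟨M, haM, -⟩ := ProjLine.exists_mem_mem_points a a
  obtain ⟨b, hbS, hb, hbM⟩ := hnoncol M
  have hab : a ≠ b := fun hab => hbM (hab ▸ haM)
  obtain ⟨L, haL, hbL⟩ := ProjLine.exists_mem_mem_points a b
  obtain ⟨c, hcS, hc, hcL⟩ := hnoncol L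
  have hTL : {a, b} ⊆ L.pointsIn S := Finset.insert_subset (ProjLine.mem_pointsIn.2 ⟨haS, haL⟩)
    (Finset.singleton_subset_iff.2 (ProjLine.mem_pointsIn.2 ⟨hbS, hbL⟩))
  have hresidual := sum_residual_add_card_le (μ := μ) hTL fun p hp => by
    rcases Finset.mem_insert.1 hp with rfl | hp
    · exact ha
    · rwa [Finset.mem_singleton.1 hp]
  rw [Finset.card_pair hab] at hresidual
  have hmissing : ∑ p ∈ L.pointsIn S, μ p < ∑ p ∈ S, μ p :=
    Finset.sum_lt_sum_of_subset L.pointsIn_subset hcS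
      (fun hcL' => hcL (ProjLine.mem_pointsIn.1 hcL').2) (Nat.pos_of_ne_zero hc)
      fun _ _ _ => Nat.zero_le _
  have hpair : μ a + μ b ≤ ∑ p ∈ L.pointsIn S, μ p :=
    Finset.sum_pair (f := μ) hab ▸ Finset.sum_le_sum_of_subset hTL
  obtain ⟨t, rfl⟩ := Nat.exists_eq_succ_of_ne_zero (n := t) (by omega)
  exact of_residual L (by omega) (of_sum_le_succ (by omega))

end ImposesIndependentConditions

end IndependentConditions

section DoubleCounting

variable {K : Type} [Field K] {S : Finset (P2 K)} {A B : Finset (ProjLine K)} {L M : ProjLine K}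
  {p : P2 K}

lemma lineMult_apply : lineMult A p = ∑ L ∈ A, L.points.indicator 1 p :=
  Finset.sum_apply _ _ _

lemma sum_mul_lineMult (f : P2 K → ℕ) :
    ∑ p ∈ S, f p * lineMult A p = ∑ L ∈ A, ∑ p ∈ L.pointsIn S, f p := by
  classical
  simp only [lineMult_apply, Finset.mul_sum, ProjLine.pointsIn, Finset.sum_filter,
    Set.indicator_apply, Pi.one_apply, mul_ite, mul_one, mul_zero]
  exact Finset.sum_comm

lemma sum_lineMult : ∑ p ∈ S, lineMult A p = ∑ L ∈ A, (L.pointsIn S).card := by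
  simpa only [one_mul, ← Finset.card_eq_sum_ones] using
    sum_mul_lineMult (S := S) (A := A) fun _ => 1

lemma exists_mem_of_lineMult_ne_zero (h : lineMult A p ≠ 0) : ∃ L ∈ A, p ∈ L.points := by
  rw [lineMult_apply] at h
  obtain ⟨L, hL, hp⟩ := Finset.exists_ne_zero_of_sum_ne_zero h
  exact ⟨L, hL, Set.mem_of_indicator_ne_zero hp⟩

lemma lineMult_mono (h : A ⊆ B) : lineMult A p ≤ lineMult B p := by
  simp only [lineMult_apply]
  exact Finset.sum_le_sum_of_subset h

lemma lineMult_sdiff_add [DecidableEq (ProjLine K)] (h : A ⊆ B) :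
    lineMult (B \ A) p + lineMult A p = lineMult B p := by
  simp only [lineMult_apply]
  exact Finset.sum_sdiff h

lemma lineMult_erase_add_one [DecidableEq (ProjLine K)] (hL : L ∈ A) (hp : p ∈ L.points) :
    lineMult (A.erase L) p + 1 = lineMult A p := by
  simp only [lineMult_apply]
  rw [← Finset.sum_erase_add _ _ hL, Set.indicator_of_mem hp, Pi.one_apply]

lemma card_pointsIn_pointsIn_le_one (h : L ≠ M) : (L.pointsIn (M.pointsIn S)).card ≤ 1 := by
  refine Finset.card_le_one.2 fun p hp q hq => ?_
  simp only [ProjLine.mem_pointsIn] at hp hq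
  by_contra hpq
  exact h (ProjLine.eq_of_mem_points hpq hp.2 hq.2 hp.1.2 hq.1.2)

lemma sum_pointsIn_lineMult_le (hM : M ∉ A) : ∑ p ∈ M.pointsIn S, lineMult A p ≤ A.card := by
  rw [sum_lineMult, Finset.card_eq_sum_ones]
  exact Finset.sum_le_sum fun L hL => card_pointsIn_pointsIn_le_one (ne_of_mem_of_not_mem hL hM)

lemma sum_pointsIn_lineMult_add_one_le (hM : M ∈ A) :
    ∑ p ∈ M.pointsIn S, lineMult A p + 1 ≤ A.card + (M.pointsIn S).card := by
  classical
  have hsplit : ∑ p ∈ M.pointsIn S, lineMult A p =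
      ∑ p ∈ M.pointsIn S, lineMult (A.erase M) p + (M.pointsIn S).card := by
    rw [Finset.card_eq_sum_ones, ← Finset.sum_add_distrib]
    exact Finset.sum_congr rfl fun p hp =>
      (lineMult_erase_add_one hM (ProjLine.mem_pointsIn.1 hp).2).symm
  have herase := sum_pointsIn_lineMult_le (S := S) (Finset.notMem_erase M A)
  rw [← Finset.card_erase_add_one hM]
  omega

end DoubleCounting

section RichArrangements

variable {K : Type} [Field K] {S : Finset (P2 K)} {Ω : Finset (ProjLine K)} {s : ℕ}

/-- The combinatorial data of the theorem: `S` has at most `1 + 2 + ⋯ + s` points, the arrangement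
`Ω` consists of all the lines meeting `S` in exactly `s` points, and there are `s` such lines. -/
structure IsRichArrangement (S : Finset (P2 K)) (Ω : Finset (ProjLine K)) (s : ℕ) : Prop where
  two_le : 2 ≤ s
  card_points_le : S.card ≤ (s + 1).choose 2
  card_lines : Ω.card = s
  mem_iff : ∀ L, L ∈ Ω ↔ (L.pointsIn S).card = s

open Classical in
/-- The points of `S` lying on exactly one line of the arrangement `Ω`. -/
noncomputable def simplePoints (S : Finset (P2 K)) (Ω : Finset (ProjLine K)) : Finset (P2 K) :=
  {p ∈ S | lineMult Ω p = 1}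

lemma mem_simplePoints {p : P2 K} : p ∈ simplePoints S Ω ↔ p ∈ S ∧ lineMult Ω p = 1 := by
  classical
  exact Finset.mem_filter

lemma simplePoints_subset : simplePoints S Ω ⊆ S := fun _ hp => (mem_simplePoints.1 hp).1

lemma pointsIn_simplePoints (M : ProjLine K) :
    M.pointsIn (simplePoints S Ω) = simplePoints (M.pointsIn S) Ω := by
  classical
  exact Finset.filter_comm _ _ _

lemma card_simplePoints_add_sum_lineMult (h : ∀ p ∈ S, lineMult Ω p = 1 ∨ lineMult Ω p = 2) :
    (simplePoints S Ω).card + ∑ p ∈ S, lineMult Ω p = 2 * S.card := by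
  classical
  rw [simplePoints, Finset.card_filter, ← Finset.sum_add_distrib, mul_comm]
  refine Finset.sum_const_nat fun p hp => ?_
  rcases h p hp with hp | hp <;> rw [hp] <;> rfl

lemma three_mul_le_mul_self_add_two (n : ℕ) : 3 * n ≤ n * n + 2 := by
  rcases le_or_gt n 1 with hn | hn
  · interval_cases n <;> norm_num
  · nlinarith

lemma three_mul_eq_mul_self_add_two_iff {n : ℕ} : 3 * n = n * n + 2 ↔ n = 1 ∨ n = 2 := by
  refine ⟨fun hn => ?_, by rintro (rfl | rfl) <;> rfl⟩
  have : n ≤ 2 := by nlinarith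
  interval_cases n <;> omega

namespace IsRichArrangement

variable (h : IsRichArrangement S Ω s)

include h

lemma sum_lineMult : ∑ p ∈ S, lineMult Ω p = s * s := by
  rw [_root_.sum_lineMult, Finset.sum_const_nat fun L hL => (h.mem_iff L).1 hL, h.card_lines]

lemma sum_pointsIn_lineMult_add_one_le {M : ProjLine K} (hM : M ∈ Ω) :
    ∑ p ∈ M.pointsIn S, lineMult Ω p + 1 ≤ 2 * s := by
  have hle := _root_.sum_pointsIn_lineMult_add_one_le (S := S) hM
  rwa [h.card_lines, (h.mem_iff M).1 hM, ← two_mul] at hle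

lemma totals_eq :
    ∑ p ∈ S, 3 * lineMult Ω p = ∑ p ∈ S, (lineMult Ω p * lineMult Ω p + 2) ∧
      ∑ M ∈ Ω, (∑ p ∈ M.pointsIn S, lineMult Ω p + 1) = ∑ _M ∈ Ω, 2 * s := by
  have hpoints : ∑ p ∈ S, 3 * lineMult Ω p ≤ ∑ p ∈ S, (lineMult Ω p * lineMult Ω p + 2) :=
    Finset.sum_le_sum fun p _ => three_mul_le_mul_self_add_two _
  have hlines : ∑ M ∈ Ω, (∑ p ∈ M.pointsIn S, lineMult Ω p + 1) ≤ ∑ _M ∈ Ω, 2 * s :=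
    Finset.sum_le_sum fun M hM => h.sum_pointsIn_lineMult_add_one_le hM
  have hcard := (Nat.le_div_iff_mul_le two_pos).1
    (h.card_points_le.trans_eq (Nat.choose_two_right _))
  rw [Nat.add_sub_cancel] at hcard
  simp only [← Finset.mul_sum, h.sum_lineMult, Finset.sum_add_distrib, Finset.sum_const,
    sum_mul_lineMult, h.card_lines, smul_eq_mul] at hpoints hlines ⊢
  constructor <;> linarith

lemma lineMult_eq_one_or_two {p : P2 K} (hp : p ∈ S) : lineMult Ω p = 1 ∨ lineMult Ω p = 2 :=
  three_mul_eq_mul_self_add_two_iff.1 <| (Finset.sum_eq_sum_iff_of_le fun _ _ =>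
    three_mul_le_mul_self_add_two _).1 h.totals_eq.1 p hp

lemma sum_pointsIn_lineMult_add_one {M : ProjLine K} (hM : M ∈ Ω) :
    ∑ p ∈ M.pointsIn S, lineMult Ω p + 1 = 2 * s :=
  (Finset.sum_eq_sum_iff_of_le fun _ hL => h.sum_pointsIn_lineMult_add_one_le hL).1
    h.totals_eq.2 M hM

lemma sum_pointsIn_lineMult_eq_card {A : Finset (ProjLine K)} (hA : A ⊆ Ω) {M : ProjLine K}
    (hM : M ∈ Ω) (hMA : M ∉ A) : ∑ p ∈ M.pointsIn S, lineMult A p = A.card := by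
  classical
  refine le_antisymm (sum_pointsIn_lineMult_le hMA) ?_
  have hrest := _root_.sum_pointsIn_lineMult_add_one_le (S := S) (Finset.mem_sdiff.2 ⟨hM, hMA⟩)
  have htotal := h.sum_pointsIn_lineMult_add_one hM
  have hcard := Finset.card_sdiff_add_card_eq_card hA
  simp only [← lineMult_sdiff_add hA, Finset.sum_add_distrib] at htotal
  rw [(h.mem_iff M).1 hM] at hrest
  rw [h.card_lines] at hcard
  omega

lemma card_pointsIn_simplePoints {M : ProjLine K} (hM : M ∈ Ω) :
    (M.pointsIn (simplePoints S Ω)).card = 1 := by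
  have hcount := card_simplePoints_add_sum_lineMult (S := M.pointsIn S) fun p hp =>
    h.lineMult_eq_one_or_two (M.pointsIn_subset hp)
  rw [(h.mem_iff M).1 hM, ← h.sum_pointsIn_lineMult_add_one hM] at hcount
  rw [pointsIn_simplePoints]
  omega

lemma card_simplePoints : (simplePoints S Ω).card = s := by
  have hcount := _root_.sum_lineMult (S := simplePoints S Ω) (A := Ω)
  rwa [Finset.sum_congr rfl fun p hp => (mem_simplePoints.1 hp).2, ← Finset.card_eq_sum_ones,
    Finset.sum_congr rfl fun M hM => h.card_pointsIn_simplePoints hM, ← Finset.card_eq_sum_ones,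
    h.card_lines] at hcount

lemma exists_mem_simplePoints_of_mem {M : ProjLine K} (hM : M ∈ Ω) :
    ∃ p ∈ simplePoints S Ω, p ∈ M.points := by
  obtain ⟨p, hp⟩ := Finset.card_pos.1 ((h.card_pointsIn_simplePoints hM).symm ▸ one_pos)
  exact ⟨p, ProjLine.mem_pointsIn.1 hp⟩

lemma exists_mem_simplePoints_notMem (L : ProjLine K) : ∃ p ∈ simplePoints S Ω, p ∉ L.points := by
  by_contra! hcollinear
  have hsubset : L.pointsIn (simplePoints S Ω) = simplePoints S Ω :=
    Finset.Subset.antisymm L.pointsIn_subset fun p hp =>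
      ProjLine.mem_pointsIn.2 ⟨hp, hcollinear p hp⟩
  have hL : L ∉ Ω := fun hL => by
    have hcard := h.card_pointsIn_simplePoints hL
    rw [hsubset, h.card_simplePoints] at hcard
    exact absurd h.two_le (by omega)
  refine hL ((h.mem_iff L).2 ?_)
  suffices hpoints : L.pointsIn S = simplePoints S Ω by rw [hpoints, h.card_simplePoints]
  refine Finset.Subset.antisymm (fun p hp => ?_) fun p hp =>
    ProjLine.mem_pointsIn.2 ⟨simplePoints_subset hp, hcollinear p hp⟩
  by_contra hsimple
  obtain ⟨hpS, hpL⟩ := ProjLine.mem_pointsIn.1 hp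
  obtain ⟨M, hM, hpM⟩ := exists_mem_of_lineMult_ne_zero (A := Ω) (p := p) <| by
    rcases h.lineMult_eq_one_or_two hpS with hp | hp <;> omega
  obtain ⟨q, hq, hqM⟩ := h.exists_mem_simplePoints_of_mem hM
  exact hL (ProjLine.eq_of_mem_points (ne_of_mem_of_not_mem hq hsimple).symm hpL
    (hcollinear q hq) hpM hqM ▸ hM)

end IsRichArrangement

end RichArrangements

section Conclusion

variable {K : Type} [Field K]

lemma hilb_fatIdeal_add_finrank (S : Finset (P2 K)) (m t : ℕ) :
    hilb (fatIdeal (S : Set (P2 K)) m) t + Module.finrank K (fatSystem S (fun _ => m) t) =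
      (t + 2).choose 2 := by
  rw [hilb, finrank_homogeneousSubmodule]
  exact Nat.sub_add_cancel finrank_fatSystem_le

lemma deltaHilb_natCast_succ (I : Ideal (MvPolynomial (Fin 3) K)) (t : ℕ) :
    deltaHilb I (t + 1) = hilb I (t + 1) - hilb I t := by
  rw [deltaHilb, add_sub_cancel_right, hilbZ, hilbZ, if_neg (by omega), if_neg (by omega)]
  rfl

namespace IsRichArrangement

variable {S : Finset (P2 K)} {Ω : Finset (ProjLine K)} {s : ℕ} (h : IsRichArrangement S Ω s)

include h

lemma imposesIndependentConditions_one (c : ℕ) (hc : 1 ≤ c) {t : ℕ} (ht : s ≤ t + 2) :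
    ImposesIndependentConditions S (fun p => 1 + c - c * lineMult Ω p) t := by
  have hsimple : ∀ p ∈ simplePoints S Ω, 1 + c - c * lineMult Ω p = 1 := fun p hp => by
    rw [(mem_simplePoints.1 hp).2, mul_one, Nat.add_sub_cancel]
  have hdouble : ∀ p ∈ S, p ∉ simplePoints S Ω → 1 + c - c * lineMult Ω p = 0 := fun p hpS hp => by
    rw [(h.lineMult_eq_one_or_two hpS).resolve_left fun hp1 => hp (mem_simplePoints.2 ⟨hpS, hp1⟩)]
    omega
  refine .of_sum_le_of_noncollinear ?_ fun L => ?_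
  · rwa [← Finset.sum_subset simplePoints_subset hdouble, Finset.sum_congr rfl hsimple,
      ← Finset.card_eq_sum_ones, h.card_simplePoints]
  · obtain ⟨p, hp, hpL⟩ := h.exists_mem_simplePoints_notMem L
    exact ⟨p, simplePoints_subset hp, (hsimple p hp).trans_ne one_ne_zero, hpL⟩

lemma card_add_sum_pointsIn_le {k c : ℕ} (hk : 1 ≤ k) (hc : 1 ≤ c) {A : Finset (ProjLine K)}
    (hA : A ⊆ Ω) {M : ProjLine K} (hM : M ∈ Ω) (hMA : M ∉ A) :
    A.card + ∑ p ∈ M.pointsIn S, (k + 1 + c - c * lineMult Ω p - lineMult A p) ≤ k * s + 1 := by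
  classical
  have hpoint : ∀ p ∈ M.pointsIn S,
      k + 1 + c - c * lineMult Ω p - lineMult A p + lineMult A p + lineMult Ω p ≤ k + 2 := by
    intro p hp
    obtain ⟨hpS, hpM⟩ := ProjLine.mem_pointsIn.1 hp
    have hlt : lineMult A p + 1 ≤ lineMult Ω p := by
      rw [← lineMult_erase_add_one hM hpM]
      exact Nat.add_le_add_right (lineMult_mono (Finset.subset_erase.2 ⟨hA, hMA⟩)) 1
    rcases h.lineMult_eq_one_or_two hpS with hp | hp <;> rw [hp] at hlt ⊢ <;> omega
  have hsum := Finset.sum_le_card_nsmul _ _ _ hpoint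
  rw [Finset.sum_add_distrib, Finset.sum_add_distrib, h.sum_pointsIn_lineMult_eq_card hA hM hMA,
    (h.mem_iff M).1 hM, smul_eq_mul, mul_add, mul_comm s k] at hsum
  have htotal := h.sum_pointsIn_lineMult_add_one hM
  omega

lemma imposesIndependentConditions {k c t : ℕ} (hk : 1 ≤ k) (hc : 1 ≤ c) (ht : k * s ≤ t + 2) :
    ImposesIndependentConditions S (fun p => k + c - c * lineMult Ω p) t := by
  induction k, hk using Nat.le_induction generalizing c t with
  | base => exact h.imposesIndependentConditions_one c hc (by omega)
  | succ k hk ih =>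
    have hs := h.two_le
    have hks := Nat.le_mul_of_pos_left s hk
    rw [Nat.succ_mul] at ht
    obtain ⟨t, rfl⟩ : ∃ u, t = u + Ω.card := ⟨t - s, by rw [h.card_lines]; omega⟩
    rw [h.card_lines] at ht
    refine .of_tsub_lineMult (fun A hA M hM hMA => ?_) ?_
    · exact (h.card_add_sum_pointsIn_le hk hc hA hM hMA).trans (by rw [h.card_lines]; omega)
    · convert ih (c := c + 1) (t := t) (by omega) (by omega) using 1
      funext p
      rw [Pi.sub_apply, Nat.sub_sub, Nat.succ_mul, add_right_comm, add_assoc k]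

lemma finrank_fatSystem_add_fatDegree {k t : ℕ} (hk : 1 ≤ k) (ht : k * s ≤ t + 2)
    (ht' : t + 1 ≤ k * s) :
    Module.finrank K (fatSystem S (fun _ => k + 1) (t + s)) +
      fatDegree S ((fun _ => k + 1) - lineMult Ω) = (t + 2).choose 2 := by
  have hindependent := h.imposesIndependentConditions hk le_rfl ht
  simp only [one_mul] at hindependent
  rw [← h.card_lines, finrank_fatSystem_add_card_eq fun A hA M hM hMA => ?_]
  · exact hindependent
  have hsum := Finset.card_nsmul_le_sum (M.pointsIn S)
    (fun p => ((fun _ => k + 1) - lineMult A : P2 K → ℕ) p + lineMult A p) (k + 1)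
    fun p _ => le_tsub_add
  rw [Finset.sum_add_distrib, h.sum_pointsIn_lineMult_eq_card hA hM hMA, (h.mem_iff M).1 hM,
    smul_eq_mul, mul_add, mul_comm s k] at hsum
  rw [h.card_lines]
  omega

lemma hilb_fatIdeal_succ {k t : ℕ} (hk : 1 ≤ k) (ht : k * s = t + 2) :
    hilb (fatIdeal (S : Set (P2 K)) (k + 1)) (t + s + 1) =
      hilb (fatIdeal (S : Set (P2 K)) (k + 1)) (t + s) + s := by
  have hdim := h.finrank_fatSystem_add_fatDegree (t := t) hk (by omega) (by omega)
  have hdim' := h.finrank_fatSystem_add_fatDegree (t := t + 1) hk (by omega) (by omega)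
  have hhilb := hilb_fatIdeal_add_finrank S (k + 1) (t + s)
  have hhilb' := hilb_fatIdeal_add_finrank S (k + 1) (t + s + 1)
  rw [add_right_comm t 1 s] at hdim'
  rw [succ_add_two_choose_two] at hdim' hhilb'
  omega

end IsRichArrangement

end Conclusion

section KConfig

variable {K : Type} [Field K] {s : ℕ} {X : Set (P2 K)} {d : Fin s → ℕ} {Xs : Fin s → Set (P2 K)}
  {Ls : Fin s → ProjLine K}

namespace IsKConfig

lemma finite (h : IsKConfig X d Xs Ls) : X.Finite := by
  rw [h.union_eq]
  refine Set.finite_iUnion fun i => Set.finite_of_ncard_pos ?_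
  rw [h.card_eq]
  exact h.one_le i

lemma ncard_le_sum (h : IsKConfig X d Xs Ls) : X.ncard ≤ ∑ i, d i := by
  rw [h.union_eq, ← Finset.sum_congr rfl fun i _ => h.card_eq i]
  exact Set.ncard_iUnion_le_of_fintype Xs

lemma ncard_le_choose_two (h : IsKConfig X (fun i => i.1 + 1) Xs Ls) :
    X.ncard ≤ (s + 1).choose 2 := by
  refine h.ncard_le_sum.trans_eq ?_
  rw [Fin.sum_univ_eq_sum_range (· + 1), Nat.choose_two_right, ← Finset.sum_range_id,
    Finset.sum_range_succ', add_zero]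

end IsKConfig

lemma ncard_inter_points (S : Finset (P2 K)) (L : ProjLine K) :
    ((S : Set (P2 K)) ∩ L.points).ncard = (L.pointsIn S).card := by
  rw [← Set.ncard_coe_finset]
  congr 1
  ext p
  exact ProjLine.mem_pointsIn.symm

lemma exists_isRichArrangement (hs : 2 ≤ s) {S : Finset (P2 K)} (hS : S.card ≤ (s + 1).choose 2)
    (hcard : {L : ProjLine K | ((S : Set (P2 K)) ∩ L.points).ncard = s}.ncard = s) :
    ∃ Ω, IsRichArrangement S Ω s := by
  have hfin := Set.finite_of_ncard_ne_zero (hcard.trans_ne (by omega))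
  refine ⟨hfin.toFinset, hs, hS, ?_, fun L => ?_⟩
  · rwa [← Set.ncard_eq_toFinset_card _ hfin]
  · rw [Set.Finite.mem_toFinset, Set.mem_ofPred_eq, ncard_inter_points]

theorem kconfig_delta_s_general (hs : 2 ≤ s) (hX : X.Finite) (hXcard : X.ncard ≤ (s + 1).choose 2)
    (hcard : {L : ProjLine K | (X ∩ L.points).ncard = s}.ncard = s) {m : ℕ} (hm : 2 ≤ m) :
    deltaHilb (fatIdeal X m) ((m : ℤ) * s - 1) = s := by
  lift X to Finset (P2 K) using hX
  rw [Set.ncard_coe_finset] at hXcard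
  obtain ⟨Ω, hΩ⟩ := exists_isRichArrangement hs hXcard hcard
  obtain ⟨k, rfl⟩ : ∃ k, m = k + 1 := ⟨m - 1, by omega⟩
  have hk : 1 ≤ k := by omega
  obtain ⟨t, ht⟩ : ∃ t, k * s = t + 2 :=
    Nat.exists_eq_add_of_le' (hs.trans (Nat.le_mul_of_pos_left s hk))
  have hdegree : ((k + 1 : ℕ) : ℤ) * s - 1 = (t + s : ℕ) + 1 := by
    zify at ht
    push_cast
    linarith
  rw [hdegree, deltaHilb_natCast_succ, hΩ.hilb_fatIdeal_succ hk ht]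
  push_cast
  ring

end KConfig

/-- **Theorem (case `d_s = s`, exactly `s` lines).** Let `X` be a
k-configuration of type `(1,2,…,s)`, `s ≥ 2`, with exactly `s` lines containing
exactly `s` points of `X`. Then `ΔH_{mX}(m·s − 1) = s` for all `m ≥ 2`. -/
theorem kconfig_delta_s {K : Type} [Field K] [IsAlgClosed K] {s : ℕ} (hs : 2 ≤ s)
    (X : Set (P2 K)) (Xs : Fin s → Set (P2 K)) (Ls : Fin s → ProjLine K)
    (hX : IsKConfig X (fun i : Fin s => i.1 + 1) Xs Ls)
    (hfin : {L : ProjLine K | (X ∩ L.points).ncard = s}.Finite)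
    (hcard : {L : ProjLine K | (X ∩ L.points).ncard = s}.ncard = s) :
    ∀ m : ℕ, 2 ≤ m → deltaHilb (fatIdeal X m) ((m : ℤ) * s - 1) = s :=
  fun _ hm => kconfig_delta_s_general hs hX.finite hX.ncard_le_choose_two hcard hm
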